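/- The graph F(8,13,2), defined as the simple graph on vertex set {1,...,8} with edge set {{1,2},{1,4},{2,3},{2,4},{2,5},{3,5},{4,5},{5,6},{3,6},{3,7},{6,7},{1,8},{7,8}}, is forbidden: there is no injective map φ : {1,...,8} → ℝ² with dist(φ(i), φ(j)) = 1 for every edge {i,j}. -/

import Mathlib

/-! In the plane, two equilateral triangles glued along a side form a rhombus, whose opposite sides
are equal as vectors. The triangles `124`, `245`, `253` therefore fill half of a regular hexagon
centred at `2`, and `253`, `536`, `367` fill half of one centred at `3`. Hence `1, 2, 3, 7` are
equally spaced on a line and `1`, `7` are at distance `3`, whereas the path `1, 8, 7` has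
length `2`. -/

open Module

section EuclideanPlane

variable {V P : Type*} [NormedAddCommGroup V] [InnerProductSpace ℝ V] [MetricSpace P]
  [NormedAddTorsor V P]

theorem vsub_eq_vsub_of_rhombus (hV : finrank ℝ V = 2) {a b c d : P} {r : ℝ}
    (hab : dist a b = r) (hac : dist a c = r) (hdb : dist d b = r) (hdc : dist d c = r)
    (had : a ≠ d) (hbc : b ≠ c) : b -ᵥ a = d -ᵥ c := by
  have : FiniteDimensional ℝ V := .of_finrank_eq_succ hV
  -- Reflection in the midpoint of `bc` swaps the circles of radius `r` about `b` and `c`, so it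
  -- permutes their common points `a` and `d`; it cannot fix both.
  let σ := AffineIsometryEquiv.pointReflection ℝ (midpoint ℝ b c)
  have σ_mem {x : P} (hxb : dist x b = r) (hxc : dist x c = r) : σ x = a ∨ σ x = d := by
    have hb : dist (σ x) b = r := by
      rw [← AffineIsometryEquiv.pointReflection_midpoint_right (V := V) b c, σ.dist_map, hxc]
    have hc : dist (σ x) c = r := by
      rw [← AffineIsometryEquiv.pointReflection_midpoint_left (V := V) b c, σ.dist_map, hxb]
    exact EuclideanGeometry.eq_of_dist_eq_of_dist_eq_of_finrank_eq_two hV hbc had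
      hab hdb hb hac hdc hc
  have σ_swap : σ a = d := by
    refine (σ_mem hab hac).resolve_left fun ha ↦ ?_
    obtain hd | hd := σ_mem hdb hdc
    · exact had (σ.injective (ha.trans hd.symm))
    · have fixed_iff := @AffineEquiv.pointReflection_fixed_iff_of_module ℝ
      exact had ((fixed_iff.1 ha).trans (fixed_iff.1 hd).symm)
  exact (midpoint_eq_midpoint_iff_vsub_eq_vsub ℝ).1 (midpoint_eq_iff.2 σ_swap).symm

theorem vsub_eq_vsub_of_half_hexagon (hV : finrank ℝ V = 2) {a b c d e : P} {r : ℝ} (hr : r ≠ 0)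
    (hab : dist a b = r) (hbd : dist b d = r) (hde : dist d e = r)
    (hca : dist c a = r) (hcb : dist c b = r) (hcd : dist c d = r) (hce : dist c e = r)
    (had : a ≠ d) (hbe : b ≠ e) : e -ᵥ c = c -ᵥ a := by
  have hne_cb : c ≠ b := dist_ne_zero.1 (hcb.trans_ne hr)
  have hne_cd : c ≠ d := dist_ne_zero.1 (hcd.trans_ne hr)
  rw [dist_comm] at hca hde
  calc e -ᵥ c = d -ᵥ b :=
        (vsub_eq_vsub_of_rhombus hV hbd (by rwa [dist_comm]) hde (by rwa [dist_comm]) hbe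
          hne_cd.symm).symm
    _ = c -ᵥ a :=
        (vsub_eq_vsub_of_rhombus hV hca hab (by rwa [dist_comm]) (by rwa [dist_comm]) had
          hne_cb).symm

theorem F_8_13_2_forbidden_general (hV : finrank ℝ V = 2) (φ : ℕ → P)
    (h12 : dist (φ 1) (φ 2) = 1) (h14 : dist (φ 1) (φ 4) = 1) (h23 : dist (φ 2) (φ 3) = 1)
    (h24 : dist (φ 2) (φ 4) = 1) (h25 : dist (φ 2) (φ 5) = 1) (h35 : dist (φ 3) (φ 5) = 1)
    (h45 : dist (φ 4) (φ 5) = 1) (h56 : dist (φ 5) (φ 6) = 1) (h36 : dist (φ 3) (φ 6) = 1)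
    (h37 : dist (φ 3) (φ 7) = 1) (h67 : dist (φ 6) (φ 7) = 1) (h18 : dist (φ 1) (φ 8) = 1)
    (h78 : dist (φ 7) (φ 8) = 1) (hne15 : φ 1 ≠ φ 5) (hne43 : φ 4 ≠ φ 3) (hne26 : φ 2 ≠ φ 6)
    (hne57 : φ 5 ≠ φ 7) : False := by
  have h32 : φ 3 -ᵥ φ 2 = φ 2 -ᵥ φ 1 :=
    vsub_eq_vsub_of_half_hexagon hV one_ne_zero h14 h45 (by rwa [dist_comm])
      (by rwa [dist_comm]) h24 h25 h23 hne15 hne43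
  have h73 : φ 7 -ᵥ φ 3 = φ 3 -ᵥ φ 2 :=
    vsub_eq_vsub_of_half_hexagon hV one_ne_zero h25 h56 h67
      (by rwa [dist_comm]) h35 h36 h37 hne26 hne57
  have h71 : φ 7 -ᵥ φ 1 = (3 : ℝ) • (φ 2 -ᵥ φ 1) := by
    calc φ 7 -ᵥ φ 1 = (φ 7 -ᵥ φ 3) + (φ 3 -ᵥ φ 2) + (φ 2 -ᵥ φ 1) := by
          simp only [vsub_add_vsub_cancel]
      _ = (3 : ℝ) • (φ 2 -ᵥ φ 1) := by
          rw [h73, h32]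
          module
  have dist_eq_three : dist (φ 1) (φ 7) = 3 := by
    rw [dist_comm, dist_eq_norm_vsub V, h71, norm_smul, ← dist_eq_norm_vsub V, dist_comm, h12]
    norm_num
  have dist_le_two : dist (φ 1) (φ 7) ≤ 1 + 1 :=
    (dist_triangle_right _ _ (φ 8)).trans_eq (by rw [h18, h78])
  linarith

end EuclideanPlane

theorem F_8_13_2_forbidden :
    ¬ ∃ φ : ℕ → EuclideanSpace ℝ (Fin 2),
      Set.InjOn φ (Set.Icc 1 8) ∧
      dist (φ 1) (φ 2) = 1 ∧
      dist (φ 1) (φ 4) = 1 ∧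
      dist (φ 2) (φ 3) = 1 ∧
      dist (φ 2) (φ 4) = 1 ∧
      dist (φ 2) (φ 5) = 1 ∧
      dist (φ 3) (φ 5) = 1 ∧
      dist (φ 4) (φ 5) = 1 ∧
      dist (φ 5) (φ 6) = 1 ∧
      dist (φ 3) (φ 6) = 1 ∧
      dist (φ 3) (φ 7) = 1 ∧
      dist (φ 6) (φ 7) = 1 ∧
      dist (φ 1) (φ 8) = 1 ∧
      dist (φ 7) (φ 8) = 1 := by
  rintro ⟨φ, hφ, h12, h14, h23, h24, h25, h35, h45, h56, h36, h37, h67, h18, h78⟩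
  apply F_8_13_2_forbidden_general finrank_euclideanSpace_fin φ <;>
    first | assumption | exact hφ.ne (by simp) (by simp) (by simp)
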